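/- arXiv:2109.08064 — 3 statements merged into one kernel-verified Lean document; each statement's English description precedes it below -/
import Mathlib

section
/- Let P : Cᵒᵖ → Pos be a Gödel doctrine, and let ψ_D ∈ P(I × U × X) and φ_D ∈ P(I × V × Y) be quantifier-free predicates of P. Then ∃_π ∀_{π'} ψ_D ≤ ∃_ρ ∀_{ρ'} φ_D holds in P(I) (i.e. i:I | ∃u.∀x.ψ_D(i,u,x) ⊢ ∃v.∀y.φ_D(i,v,y)) if and only if there exist arrows f₀ : I × U → V and f₁ : I × U × Y → X of C such that the reindexing of ψ_D along the arrow I × U × Y → I × U × X given by (i,u,y) ↦ (i, u, f₁(i,u,y)) is less than or equal to the reindexing of φ_D along the arrow I × U × Y → I × V × Y given by (i,u,y) ↦ (i, f₀(i,u), y), in the fibre P(I × U × Y). Here π' : I × U × X → I × U, π : I × U → I, ρ' : I × V × Y → I × V, ρ : I × V → I are product projections. -/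
open CategoryTheory MonoidalCategory CartesianMonoidalCategory

universe v u

/-- A doctrine: a (contravariant) functor from a category `C` with finite products
to the category of posets and monotone maps, presented concretely. -/
structure Doctrine (C : Type u) [Category.{v} C] [CartesianMonoidalCategory C] where
  obj : C → Type*
  ord : ∀ A : C, PartialOrder (obj A)
  map : ∀ {A B : C}, (A ⟶ B) → obj B → obj A
  map_mono : ∀ {A B : C} (f : A ⟶ B), Monotone (map f)
  map_id : ∀ {A : C} (α : obj A), map (𝟙 A) α = α
  map_comp : ∀ {A B D : C} (f : A ⟶ B) (g : B ⟶ D) (α : obj D),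
    map (f ≫ g) α = map f (map g α)

attribute [instance] Doctrine.ord

/-- A doctrine that is both existential and universal: reindexing along the two
product projections has both adjoints, satisfying the Beck–Chevalley condition. -/
structure EUDoctrine (C : Type u) [Category.{v} C] [CartesianMonoidalCategory C]
    extends Doctrine C where
  ex1 : ∀ {A B : C}, obj (A ⊗ B) → obj A
  ex1_gc : ∀ (A B : C), GaloisConnection (ex1 (A := A) (B := B)) (map (fst A B))
  ex2 : ∀ {A B : C}, obj (A ⊗ B) → obj B
  ex2_gc : ∀ (A B : C), GaloisConnection (ex2 (A := A) (B := B)) (map (snd A B))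
  ex1_bc : ∀ {A A' B : C} (f : A' ⟶ A) (β : obj (A ⊗ B)),
    ex1 (map (f ⊗ₘ 𝟙 B) β) = map f (ex1 β)
  ex2_bc : ∀ {A B B' : C} (f : B' ⟶ B) (β : obj (A ⊗ B)),
    ex2 (map (𝟙 A ⊗ₘ f) β) = map f (ex2 β)
  all1 : ∀ {A B : C}, obj (A ⊗ B) → obj A
  all1_gc : ∀ (A B : C), GaloisConnection (map (fst A B)) (all1 (A := A) (B := B))
  all2 : ∀ {A B : C}, obj (A ⊗ B) → obj B
  all2_gc : ∀ (A B : C), GaloisConnection (map (snd A B)) (all2 (A := A) (B := B))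
  all1_bc : ∀ {A A' B : C} (f : A' ⟶ A) (β : obj (A ⊗ B)),
    all1 (map (f ⊗ₘ 𝟙 B) β) = map f (all1 β)
  all2_bc : ∀ {A B B' : C} (f : B' ⟶ B) (β : obj (A ⊗ B)),
    all2 (map (𝟙 A ⊗ₘ f) β) = map f (all2 β)

namespace EUDoctrine

variable {C : Type u} [Category.{v} C] [CartesianMonoidalCategory C] (D : EUDoctrine C)

/-- `α` is an existential splitting: whenever `α ≤ ∃_{π_A} β` there is `g : A ⟶ B`
with `α ≤ P_⟨1_A, g⟩ β`. -/
def ExSplitting {A : C} (α : D.obj A) : Prop :=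
  ∀ (B : C) (β : D.obj (A ⊗ B)), α ≤ D.ex1 β →
    ∃ g : A ⟶ B, α ≤ D.map (lift (𝟙 A) g) β

/-- `α` is existential-free: every reindexing of `α` is an existential splitting. -/
def ExFree {I : C} (α : D.obj I) : Prop :=
  ∀ (A : C) (f : A ⟶ I), D.ExSplitting (D.map f α)

/-- `α` is a universal splitting in the subdoctrine of existential-free predicates. -/
def UnivSplittingSub {A : C} (α : D.obj A) : Prop :=
  ∀ (B : C) (β : D.obj (A ⊗ B)), D.ExFree β → D.all1 β ≤ α →
    ∃ g : A ⟶ B, D.map (lift (𝟙 A) g) β ≤ α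

/-- `α` is universal-free in the subdoctrine of existential-free predicates. -/
def UnivFreeSub {I : C} (α : D.obj I) : Prop :=
  ∀ (A : C) (f : A ⟶ I), D.UnivSplittingSub (D.map f α)

/-- `α` is quantifier-free: existential-free and universal-free in the subdoctrine of
existential-free predicates. -/
def QFree {I : C} (α : D.obj I) : Prop := D.ExFree α ∧ D.UnivFreeSub α

end EUDoctrine

/-- A Gödel doctrine. -/
structure GoedelDoctrine (C : Type u) [Category.{v} C] [CartesianMonoidalCategory C]
    [MonoidalClosed C] extends EUDoctrine C where
  enough_exFree : ∀ (I : C) (α : obj I), ∃ (A : C) (β : obj (I ⊗ A)),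
    toEUDoctrine.ExFree β ∧ α = ex1 β
  exFree_all1 : ∀ {A B : C} (α : obj (A ⊗ B)),
    toEUDoctrine.ExFree α → toEUDoctrine.ExFree (all1 α)
  exFree_all2 : ∀ {A B : C} (α : obj (A ⊗ B)),
    toEUDoctrine.ExFree α → toEUDoctrine.ExFree (all2 α)
  enough_univFree : ∀ (I : C) (α : obj I), toEUDoctrine.ExFree α →
    ∃ (A : C) (β : obj (I ⊗ A)), toEUDoctrine.ExFree β ∧ toEUDoctrine.UnivFreeSub β ∧
      α = all1 β

/-!
Existential freeness turns `∀x.ψ(i,u,x) ⊢ ∃v.∀y.φ(i,v,y)` into a choice of `v` as a function of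
`(i,u)`, and adjointness of `∀y` leaves `∀x.ψ(i,u,x) ⊢ φ(i,f₀(i,u),y)` in the context `(i,u,y)`,
where universal freeness of `φ` provides a counterexample `x` as a function of `(i,u,y)`.
Splittings only speak of sections `⟨1, g⟩` of a projection; by the Beck–Chevalley condition they
also provide arrows `⟨h, f⟩` over an arbitrary `h`, which is the form used at both choices.
-/

section

variable {C : Type u} [Category.{v} C] [CartesianMonoidalCategory C]

theorem Doctrine.map_lift_id_map_tensorHom (D : Doctrine C) {A B X : C} (h : A ⟶ B) (f : A ⟶ X)
    (β : D.obj (B ⊗ X)) :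
    D.map (lift (𝟙 A) f) (D.map (h ⊗ₘ 𝟙 X) β) = D.map (lift h f) β := by
  rw [← D.map_comp, lift_map, Category.id_comp, Category.comp_id]

namespace EUDoctrine

variable (D : EUDoctrine C)

theorem map_lift_le_map_ex1 {A B X : C} (h : A ⟶ B) (f : A ⟶ X) (β : D.obj (B ⊗ X)) :
    D.map (lift h f) β ≤ D.map h (D.ex1 β) :=
  calc
    D.map (lift h f) β ≤ D.map (lift h f) (D.map (fst B X) (D.ex1 β)) :=
      D.map_mono _ ((D.ex1_gc B X).le_u_l β)
    _ = D.map h (D.ex1 β) := by rw [← D.map_comp, lift_fst]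

theorem map_all1_le_map_lift {A B X : C} (h : A ⟶ B) (f : A ⟶ X) (β : D.obj (B ⊗ X)) :
    D.map h (D.all1 β) ≤ D.map (lift h f) β :=
  calc
    D.map h (D.all1 β) = D.map (lift h f) (D.map (fst B X) (D.all1 β)) := by
      rw [← D.map_comp, lift_fst]
    _ ≤ D.map (lift h f) β := D.map_mono _ ((D.all1_gc B X).l_u_le β)

theorem le_map_all1_iff {A B Y : C} (k : A ⟶ B) (α : D.obj A) (φ : D.obj (B ⊗ Y)) :
    α ≤ D.map k (D.all1 φ) ↔ D.map (fst A Y) α ≤ D.map (k ⊗ₘ 𝟙 Y) φ := by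
  rw [← D.all1_bc]
  exact (D.all1_gc A Y _ _).symm

variable {D}

theorem ExFree.exSplitting {A : C} {α : D.obj A} (hα : D.ExFree α) : D.ExSplitting α := by
  simpa only [D.map_id] using hα A (𝟙 A)

theorem ExFree.map {A B : C} {β : D.obj B} (hβ : D.ExFree β) (f : A ⟶ B) :
    D.ExFree (D.map f β) := by
  intro E g
  rw [← D.map_comp]
  exact hβ E (g ≫ f)

theorem ExSplitting.le_map_ex1_iff {A B V : C} {α : D.obj A} (hα : D.ExSplitting α) (h : A ⟶ B)
    (β : D.obj (B ⊗ V)) :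
    α ≤ D.map h (D.ex1 β) ↔ ∃ f : A ⟶ V, α ≤ D.map (lift h f) β := by
  constructor
  · intro hle
    rw [← D.ex1_bc] at hle
    obtain ⟨f, hf⟩ := hα V _ hle
    exact ⟨f, hf.trans_eq (D.map_lift_id_map_tensorHom h f β)⟩
  · rintro ⟨f, hf⟩
    exact hf.trans (D.map_lift_le_map_ex1 h f β)

theorem UnivSplittingSub.map_all1_le_iff {A B X : C} {α : D.obj A} (hα : D.UnivSplittingSub α)
    (h : A ⟶ B) {β : D.obj (B ⊗ X)} (hβ : D.ExFree β) :
    D.map h (D.all1 β) ≤ α ↔ ∃ f : A ⟶ X, D.map (lift h f) β ≤ α := by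
  constructor
  · intro hle
    rw [← D.all1_bc] at hle
    obtain ⟨f, hf⟩ := hα X _ (hβ.map (h ⊗ₘ 𝟙 X)) hle
    exact ⟨f, (D.map_lift_id_map_tensorHom h f β).symm.trans_le hf⟩
  · rintro ⟨f, hf⟩
    exact (D.map_all1_le_map_lift h f β).trans hf

theorem UnivFreeSub.all1_le_map_all1_iff {A B X Y : C} {φ : D.obj (B ⊗ Y)} (hφ : D.UnivFreeSub φ)
    (k : A ⟶ B) {ψ : D.obj (A ⊗ X)} (hψ : D.ExFree ψ) :
    D.all1 ψ ≤ D.map k (D.all1 φ) ↔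
      ∃ f : A ⊗ Y ⟶ X, D.map (lift (fst A Y) f) ψ ≤ D.map (k ⊗ₘ 𝟙 Y) φ := by
  rw [D.le_map_all1_iff]
  exact (hφ (A ⊗ Y) (k ⊗ₘ 𝟙 Y)).map_all1_le_iff (fst A Y) hψ

theorem ExSplitting.ex1_le_ex1_iff {I U V : C} {α : D.obj (I ⊗ U)} (hα : D.ExSplitting α)
    (β : D.obj (I ⊗ V)) :
    D.ex1 α ≤ D.ex1 β ↔ ∃ f : I ⊗ U ⟶ V, α ≤ D.map (lift (fst I U) f) β :=
  (D.ex1_gc I U α (D.ex1 β)).trans (hα.le_map_ex1_iff (fst I U) β)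

end EUDoctrine

theorem GoedelDoctrine.dialectica_implication_general (D : EUDoctrine C) {I U X V Y : C}
    (ψ : D.obj ((I ⊗ U) ⊗ X)) (φ : D.obj ((I ⊗ V) ⊗ Y))
    (hψ : D.ExFree ψ) (hallψ : D.ExSplitting (D.all1 ψ)) (hφ : D.UnivFreeSub φ) :
    D.ex1 (D.all1 ψ) ≤ D.ex1 (D.all1 φ) ↔
      ∃ (f₀ : I ⊗ U ⟶ V) (f₁ : (I ⊗ U) ⊗ Y ⟶ X),
        D.map (lift (fst (I ⊗ U) Y) f₁) ψ ≤ D.map (lift (fst I U) f₀ ⊗ₘ 𝟙 Y) φ :=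
  calc
    D.ex1 (D.all1 ψ) ≤ D.ex1 (D.all1 φ)
      ↔ ∃ f₀ : I ⊗ U ⟶ V, D.all1 ψ ≤ D.map (lift (fst I U) f₀) (D.all1 φ) :=
        hallψ.ex1_le_ex1_iff (D.all1 φ)
    _ ↔ ∃ (f₀ : I ⊗ U ⟶ V) (f₁ : (I ⊗ U) ⊗ Y ⟶ X),
          D.map (lift (fst (I ⊗ U) Y) f₁) ψ ≤ D.map (lift (fst I U) f₀ ⊗ₘ 𝟙 Y) φ :=
        exists_congr fun f₀ => hφ.all1_le_map_all1_iff (lift (fst I U) f₀) hψ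

end

/-- **Dialectica interpretation of implication in a Gödel doctrine** (Theorem 2): for
quantifier-free predicates `ψ_D ∈ P(I × U × X)` and `φ_D ∈ P(I × V × Y)`, one has
`i:I | ∃u.∀x.ψ_D(i,u,x) ⊢ ∃v.∀y.φ_D(i,v,y)` iff there exist a witness function
`f₀ : I × U ⟶ V` and a counterexample function `f₁ : I × U × Y ⟶ X` with
`ψ_D(i,u,f₁(i,u,y)) ⊢ φ_D(i,f₀(i,u),y)`. -/
theorem GoedelDoctrine.dialectica_implication {C : Type u} [Category.{v} C]
    [CartesianMonoidalCategory C] [MonoidalClosed C] (D : GoedelDoctrine C)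
    {I U X V Y : C}
    (ψ : D.obj ((I ⊗ U) ⊗ X)) (φ : D.obj ((I ⊗ V) ⊗ Y))
    (hψ : D.toEUDoctrine.QFree ψ) (hφ : D.toEUDoctrine.QFree φ) :
    D.ex1 (D.all1 ψ) ≤ D.ex1 (D.all1 φ) ↔
      ∃ (f₀ : I ⊗ U ⟶ V) (f₁ : (I ⊗ U) ⊗ Y ⟶ X),
        D.map (lift (fst (I ⊗ U) Y) f₁) ψ ≤ D.map (lift (fst I U) f₀ ⊗ₘ 𝟙 Y) φ :=
  dialectica_implication_general D.toEUDoctrine ψ φ hψ.1 (D.exFree_all1 ψ hψ.1).exSplitting hφ.2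
end

section
/- Every Gödel hyperdoctrine P : Cᵒᵖ → Hey satisfies the Rule of Independence of Premise: for all objects A, B of C, every β ∈ P(A × B) and every existential-free predicate α ∈ P(A), if ⊤ ≤ α → ∃_{π_A} β holds in P(A) (i.e. a:A | ⊤ ⊢ α(a) → ∃b.β(a,b)), then ⊤ ≤ ∃_{π_A} (P_{π_A} α → β) holds in P(A) (i.e. a:A | ⊤ ⊢ ∃b.(α(a) → β(a,b))), where π_A : A × B → A is the product projection. -/
open CategoryTheory MonoidalCategory CartesianMonoidalCategory

universe v u

/-- A hyperdoctrine: a (contravariant) functor from a category `C` with finite products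
to the category of Heyting algebras and Heyting algebra homomorphisms,
presented concretely. -/
structure Hyperdoctrine (C : Type u) [Category.{v} C] [CartesianMonoidalCategory C] where
  obj : C → Type*
  hey : ∀ A : C, HeytingAlgebra (obj A)
  map : ∀ {A B : C}, (A ⟶ B) → obj B → obj A
  map_mono : ∀ {A B : C} (f : A ⟶ B), Monotone (map f)
  map_id : ∀ {A : C} (α : obj A), map (𝟙 A) α = α
  map_comp : ∀ {A B D : C} (f : A ⟶ B) (g : B ⟶ D) (α : obj D),
    map (f ≫ g) α = map f (map g α)
  map_inf : ∀ {A B : C} (f : A ⟶ B) (x y : obj B), map f (x ⊓ y) = map f x ⊓ map f y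
  map_sup : ∀ {A B : C} (f : A ⟶ B) (x y : obj B), map f (x ⊔ y) = map f x ⊔ map f y
  map_top : ∀ {A B : C} (f : A ⟶ B), map f ⊤ = ⊤
  map_bot : ∀ {A B : C} (f : A ⟶ B), map f ⊥ = ⊥
  map_himp : ∀ {A B : C} (f : A ⟶ B) (x y : obj B), map f (x ⇨ y) = map f x ⇨ map f y

attribute [instance] Hyperdoctrine.hey

/-- A hyperdoctrine that is both existential and universal: reindexing along the two
product projections has both adjoints, satisfying the Beck–Chevalley condition. -/
structure EUHyperdoctrine (C : Type u) [Category.{v} C] [CartesianMonoidalCategory C]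
    extends Hyperdoctrine C where
  ex1 : ∀ {A B : C}, obj (A ⊗ B) → obj A
  ex1_gc : ∀ (A B : C), GaloisConnection (ex1 (A := A) (B := B)) (map (fst A B))
  ex2 : ∀ {A B : C}, obj (A ⊗ B) → obj B
  ex2_gc : ∀ (A B : C), GaloisConnection (ex2 (A := A) (B := B)) (map (snd A B))
  ex1_bc : ∀ {A A' B : C} (f : A' ⟶ A) (β : obj (A ⊗ B)),
    ex1 (map (f ⊗ₘ 𝟙 B) β) = map f (ex1 β)
  ex2_bc : ∀ {A B B' : C} (f : B' ⟶ B) (β : obj (A ⊗ B)),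
    ex2 (map (𝟙 A ⊗ₘ f) β) = map f (ex2 β)
  all1 : ∀ {A B : C}, obj (A ⊗ B) → obj A
  all1_gc : ∀ (A B : C), GaloisConnection (map (fst A B)) (all1 (A := A) (B := B))
  all2 : ∀ {A B : C}, obj (A ⊗ B) → obj B
  all2_gc : ∀ (A B : C), GaloisConnection (map (snd A B)) (all2 (A := A) (B := B))
  all1_bc : ∀ {A A' B : C} (f : A' ⟶ A) (β : obj (A ⊗ B)),
    all1 (map (f ⊗ₘ 𝟙 B) β) = map f (all1 β)
  all2_bc : ∀ {A B B' : C} (f : B' ⟶ B) (β : obj (A ⊗ B)),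
    all2 (map (𝟙 A ⊗ₘ f) β) = map f (all2 β)

namespace EUHyperdoctrine

variable {C : Type u} [Category.{v} C] [CartesianMonoidalCategory C] (D : EUHyperdoctrine C)

/-- `α` is an existential splitting: whenever `α ≤ ∃_{π_A} β` there is `g : A ⟶ B`
with `α ≤ P_⟨1_A, g⟩ β`. -/
def ExSplitting {A : C} (α : D.obj A) : Prop :=
  ∀ (B : C) (β : D.obj (A ⊗ B)), α ≤ D.ex1 β →
    ∃ g : A ⟶ B, α ≤ D.map (lift (𝟙 A) g) β

/-- `α` is existential-free: every reindexing of `α` is an existential splitting. -/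
def ExFree {I : C} (α : D.obj I) : Prop :=
  ∀ (A : C) (f : A ⟶ I), D.ExSplitting (D.map f α)

/-- `α` is a universal splitting in the subdoctrine of existential-free predicates. -/
def UnivSplittingSub {A : C} (α : D.obj A) : Prop :=
  ∀ (B : C) (β : D.obj (A ⊗ B)), D.ExFree β → D.all1 β ≤ α →
    ∃ g : A ⟶ B, D.map (lift (𝟙 A) g) β ≤ α

/-- `α` is universal-free in the subdoctrine of existential-free predicates. -/
def UnivFreeSub {I : C} (α : D.obj I) : Prop :=
  ∀ (A : C) (f : A ⟶ I), D.UnivSplittingSub (D.map f α)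

/-- `α` is quantifier-free: existential-free and universal-free in the subdoctrine of
existential-free predicates. -/
def QFree {I : C} (α : D.obj I) : Prop := D.ExFree α ∧ D.UnivFreeSub α

end EUHyperdoctrine

/-- A Gödel hyperdoctrine: a Gödel doctrine whose fibres are Heyting algebras and whose
reindexing maps are Heyting algebra homomorphisms. -/
structure GoedelHyperdoctrine (C : Type u) [Category.{v} C] [CartesianMonoidalCategory C]
    [MonoidalClosed C] extends EUHyperdoctrine C where
  enough_exFree : ∀ (I : C) (α : obj I), ∃ (A : C) (β : obj (I ⊗ A)),
    toEUHyperdoctrine.ExFree β ∧ α = ex1 β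
  exFree_all1 : ∀ {A B : C} (α : obj (A ⊗ B)),
    toEUHyperdoctrine.ExFree α → toEUHyperdoctrine.ExFree (all1 α)
  exFree_all2 : ∀ {A B : C} (α : obj (A ⊗ B)),
    toEUHyperdoctrine.ExFree α → toEUHyperdoctrine.ExFree (all2 α)
  enough_univFree : ∀ (I : C) (α : obj I), toEUHyperdoctrine.ExFree α →
    ∃ (A : C) (β : obj (I ⊗ A)), toEUHyperdoctrine.ExFree β ∧
      toEUHyperdoctrine.UnivFreeSub β ∧ α = all1 β

namespace Hyperdoctrine

variable {C : Type u} [Category.{v} C] [CartesianMonoidalCategory C] (D : Hyperdoctrine C)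
  {X A B : C}

lemma map_lift_map_fst (f : X ⟶ A) (g : X ⟶ B) (α : D.obj A) :
    D.map (lift f g) (D.map (fst A B) α) = D.map f α := by
  rw [← D.map_comp, lift_fst]

lemma map_lift_map_fst_himp (f : X ⟶ A) (g : X ⟶ B) (α : D.obj A) (β : D.obj (A ⊗ B)) :
    D.map (lift f g) (D.map (fst A B) α ⇨ β) = D.map f α ⇨ D.map (lift f g) β := by
  rw [D.map_himp, D.map_lift_map_fst]

end Hyperdoctrine

namespace EUHyperdoctrine

variable {C : Type u} [Category.{v} C] [CartesianMonoidalCategory C] {D : EUHyperdoctrine C}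
  {X A B : C}

lemma map_lift_le_map_ex1 (f : X ⟶ A) (g : X ⟶ B) (β : D.obj (A ⊗ B)) :
    D.map (lift f g) β ≤ D.map f (D.ex1 β) :=
  calc D.map (lift f g) β
    _ ≤ D.map (lift f g) (D.map (fst A B) (D.ex1 β)) := D.map_mono _ ((D.ex1_gc A B).le_u_l β)
    _ = D.map f (D.ex1 β) := D.map_lift_map_fst f g _

lemma ExFree.exSplitting {α : D.obj A} (hα : D.ExFree α) : D.ExSplitting α := by
  simpa only [D.map_id] using hα A (𝟙 A)

end EUHyperdoctrine

theorem GoedelHyperdoctrine.independence_of_premise_general {C : Type u} [Category.{v} C]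
    [CartesianMonoidalCategory C] (D : EUHyperdoctrine C) {A B : C} {α : D.obj A}
    {β : D.obj (A ⊗ B)} (hα : D.ExSplitting α) (h : ⊤ ≤ α ⇨ D.ex1 β) :
    ⊤ ≤ D.ex1 (D.map (fst A B) α ⇨ β) := by
  have hαβ : α ≤ D.ex1 β := himp_eq_top_iff.mp (top_le_iff.mp h)
  obtain ⟨g, hg⟩ : ∃ g : A ⟶ B, α ≤ D.map (lift (𝟙 A) g) β := hα B β hαβ
  calc ⊤
    _ ≤ α ⇨ D.map (lift (𝟙 A) g) β := (himp_eq_top_iff.mpr hg).ge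
    _ = D.map (lift (𝟙 A) g) (D.map (fst A B) α ⇨ β) := by
      rw [D.map_lift_map_fst_himp, D.map_id]
    _ ≤ D.map (𝟙 A) (D.ex1 (D.map (fst A B) α ⇨ β)) :=
      EUHyperdoctrine.map_lift_le_map_ex1 (𝟙 A) g _
    _ = D.ex1 (D.map (fst A B) α ⇨ β) := D.map_id _

/-- **Rule of Independence of Premise** (Theorem 5): in a Gödel hyperdoctrine, for every
existential-free `α ∈ P(A)` and every `β ∈ P(A × B)`, if `a:A | ⊤ ⊢ α(a) → ∃b.β(a,b)`
then `a:A | ⊤ ⊢ ∃b.(α(a) → β(a,b))`. -/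
theorem GoedelHyperdoctrine.independence_of_premise {C : Type u} [Category.{v} C]
    [CartesianMonoidalCategory C] [MonoidalClosed C] (D : GoedelHyperdoctrine C)
    {A B : C} (α : D.obj A) (β : D.obj (A ⊗ B))
    (hα : D.toEUHyperdoctrine.ExFree α)
    (h : ⊤ ≤ α ⇨ D.ex1 β) :
    ⊤ ≤ D.ex1 (D.map (fst A B) α ⇨ β) :=
  independence_of_premise_general D.toEUHyperdoctrine hα.exSplitting h
end

section
/- Every Gödel hyperdoctrine P : Cᵒᵖ → Hey in which the bottom element ⊥ of each fibre is a quantifier-free predicate satisfies Markov's Rule: for all objects A, B of C and every quantifier-free predicate α_D ∈ P(A × B), if ⊤ ≤ ¬ ∀_{π_B} α_D holds in P(B) (i.e. b:B | ⊤ ⊢ ¬∀a.α_D(a,b)), then ⊤ ≤ ∃_{π_B} (¬ α_D) holds in P(B) (i.e. b:B | ⊤ ⊢ ∃a.¬α_D(a,b)), where π_B : A × B → B is the product projection. -/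
open CategoryTheory MonoidalCategory CartesianMonoidalCategory

universe v u

/-!
That `⊥` is a universal splitting turns the entailment `∀a.α(a,b) ⊢ ⊥` into a term `g : B ⟶ A`
with `α(g(b),b) ⊢ ⊥`. Reindexing preserves negation, so `¬α(g(b),b)` is valid, and `g` witnesses
`∃a.¬α(a,b)`.
-/

theorem Hyperdoctrine.map_compl {C : Type u} [Category.{v} C] [CartesianMonoidalCategory C]
    (D : Hyperdoctrine C) {X Y : C} (f : X ⟶ Y) (α : D.obj Y) :
    D.map f αᶜ = (D.map f α)ᶜ := by
  rw [← himp_bot, D.map_himp, D.map_bot, himp_bot]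

namespace EUHyperdoctrine

variable {C : Type u} [Category.{v} C] [CartesianMonoidalCategory C] {D : EUHyperdoctrine C}

theorem ExFree.map {X Y : C} {α : D.obj Y} (hα : D.ExFree α) (f : X ⟶ Y) :
    D.ExFree (D.map f α) := by
  intro Z g
  rw [← D.map_comp]
  exact hα Z (g ≫ f)

theorem UnivFreeSub.univSplittingSub {A : C} {α : D.obj A} (hα : D.UnivFreeSub α) :
    D.UnivSplittingSub α := by
  simpa only [D.map_id] using hα A (𝟙 A)

theorem map_lift_id_le_ex2 {A B : C} (g : B ⟶ A) (β : D.obj (A ⊗ B)) :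
    D.map (lift g (𝟙 B)) β ≤ D.ex2 β :=
  calc
    D.map (lift g (𝟙 B)) β ≤ D.map (lift g (𝟙 B)) (D.map (snd A B) (D.ex2 β)) :=
      D.map_mono _ ((D.ex2_gc A B).le_u_l β)
    _ = D.ex2 β := by rw [← D.map_comp, lift_snd, D.map_id]

theorem map_swap_map_swap {A B : C} (α : D.obj (A ⊗ B)) :
    D.map (lift (snd A B) (fst A B)) (D.map (lift (snd B A) (fst B A)) α) = α := by
  rw [← D.map_comp, comp_lift, lift_fst, lift_snd, lift_fst_snd, D.map_id]

theorem map_swap_le_map_swap_iff {A B : C} {α β : D.obj (A ⊗ B)} :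
    D.map (lift (snd B A) (fst B A)) α ≤ D.map (lift (snd B A) (fst B A)) β ↔ α ≤ β := by
  refine ⟨fun h => ?_, fun h => D.map_mono _ h⟩
  simpa only [map_swap_map_swap] using D.map_mono (lift (snd A B) (fst A B)) h

theorem all1_map_swap {A B : C} (α : D.obj (A ⊗ B)) :
    D.all1 (D.map (lift (snd B A) (fst B A)) α) = D.all2 α := by
  refine eq_of_forall_le_iff fun γ => ?_
  have map_fst_eq : D.map (fst B A) γ = D.map (lift (snd B A) (fst B A)) (D.map (snd A B) γ) := by
    rw [← D.map_comp, lift_snd]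
  rw [← (D.all1_gc B A).le_iff_le, ← (D.all2_gc A B).le_iff_le, map_fst_eq,
    map_swap_le_map_swap_iff]

theorem UnivSplittingSub.exists_map_lift_id_le {A B : C} {γ : D.obj B}
    (hγ : D.UnivSplittingSub γ) {α : D.obj (A ⊗ B)} (hα : D.ExFree α) (h : D.all2 α ≤ γ) :
    ∃ g : B ⟶ A, D.map (lift g (𝟙 B)) α ≤ γ := by
  obtain ⟨g, hg⟩ := hγ A (D.map (lift (snd B A) (fst B A)) α) (hα.map _)
    ((all1_map_swap α).trans_le h)
  refine ⟨g, ?_⟩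
  rwa [← D.map_comp, comp_lift, lift_snd, lift_fst] at hg

end EUHyperdoctrine

theorem GoedelHyperdoctrine.markov_rule_general {C : Type u} [Category.{v} C]
    [CartesianMonoidalCategory C] (D : EUHyperdoctrine C) {A B : C}
    (hbot : D.UnivSplittingSub (⊥ : D.obj B)) (αD : D.obj (A ⊗ B)) (hα : D.ExFree αD)
    (h : ⊤ ≤ (D.all2 αD)ᶜ) :
    ⊤ ≤ D.ex2 αDᶜ := by
  have all_le_bot : D.all2 αD ≤ ⊥ := (disjoint_top.mp (le_compl_iff_disjoint_left.mp h)).le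
  obtain ⟨g, hg⟩ := hbot.exists_map_lift_id_le hα all_le_bot
  calc
    ⊤ = (D.map (lift g (𝟙 B)) αD)ᶜ := by rw [le_bot_iff.mp hg, compl_bot]
    _ = D.map (lift g (𝟙 B)) αDᶜ := (D.map_compl _ αD).symm
    _ ≤ D.ex2 αDᶜ := EUHyperdoctrine.map_lift_id_le_ex2 g αDᶜ

/-- **Markov's Rule** (Corollary 1): in a Gödel hyperdoctrine in which the bottom element of
each fibre is quantifier-free, for every quantifier-free `α_D ∈ P(A × B)`, if
`b:B | ⊤ ⊢ ¬∀a.α_D(a,b)` then `b:B | ⊤ ⊢ ∃a.¬α_D(a,b)`. -/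
theorem GoedelHyperdoctrine.markov_rule {C : Type u} [Category.{v} C]
    [CartesianMonoidalCategory C] [MonoidalClosed C] (D : GoedelHyperdoctrine C)
    (hbot : ∀ I : C, D.toEUHyperdoctrine.QFree (⊥ : D.obj I))
    {A B : C} (αD : D.obj (A ⊗ B))
    (hα : D.toEUHyperdoctrine.QFree αD)
    (h : ⊤ ≤ (D.all2 αD)ᶜ) :
    ⊤ ≤ D.ex2 αDᶜ :=
  GoedelHyperdoctrine.markov_rule_general D.toEUHyperdoctrine (hbot B).2.univSplittingSub αD hα.1 h
end
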